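/- Let P be a set of n points in the plane in convex position and let s > 2 be an integer. Then the edge set of the complete geometric graph K(P) can be partitioned into ⌈n/s⌉ classes such that each class, viewed as a geometric graph on P, is ((s−1)(s−2)/2)-plane (each edge crosses at most (s−1)(s−2)/2 other edges of its class). -/

import Mathlib

/-- Points of the plane. -/
abbrev Pt : Type := ℝ × ℝ

/-- A finite point set is in general position if no three of its points are collinear. -/
def GenPos (P : Finset Pt) : Prop :=
  ∀ p ∈ P, ∀ q ∈ P, ∀ r ∈ P, p ≠ q → p ≠ r → q ≠ r →
    ¬ Collinear ℝ ({p, q, r} : Set Pt)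

/-- A finite point set is in convex position: general position and no point lies in the
convex hull of the others. -/
def ConvexPos (P : Finset Pt) : Prop :=
  GenPos P ∧ ∀ p ∈ P, p ∉ convexHull ℝ ((P.erase p : Finset Pt) : Set Pt)

/-- The edge set of the complete geometric graph on `P`: all unordered pairs of
distinct points of `P`. -/
def KEdges (P : Finset Pt) : Set (Sym2 Pt) :=
  {e | ∃ p ∈ P, ∃ q ∈ P, p ≠ q ∧ e = s(p, q)}

/-- Two edges cross: they share no endpoint and their open segments intersect. -/
def Cross (e f : Sym2 Pt) : Prop :=
  (∀ x, x ∈ e → x ∉ f) ∧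
    ∃ p q r s : Pt, e = s(p, q) ∧ f = s(r, s) ∧
      (openSegment ℝ p q ∩ openSegment ℝ r s).Nonempty

/-- A set of edges is `k`-plane if each of its edges crosses at most `k` other edges
of the set. -/
def KPlane (k : ℕ) (E : Set (Sym2 Pt)) : Prop :=
  ∀ e ∈ E, {f | f ∈ E ∧ Cross e f}.ncard ≤ k

/-- A set of edges is `k`-quasi-plane if it contains no `k` pairwise crossing edges. -/
def KQuasiPlane (k : ℕ) (E : Set (Sym2 Pt)) : Prop :=
  ¬ ∃ S : Finset (Sym2 Pt), ↑S ⊆ E ∧ S.card = k ∧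
      (S : Set (Sym2 Pt)).Pairwise Cross

/-- The set of crossing pairs (unordered) of a set of edges. -/
def CrossPairs (E : Set (Sym2 Pt)) : Set (Sym2 (Sym2 Pt)) :=
  {c | ∃ e ∈ E, ∃ f ∈ E, Cross e f ∧ c = s(e, f)}

/-- A crossing family in `K(P)`: a finite set of pairwise crossing edges of `K(P)`. -/
def CrossingFamily (P : Finset Pt) (S : Finset (Sym2 Pt)) : Prop :=
  ↑S ⊆ KEdges P ∧ (S : Set (Sym2 Pt)).Pairwise Cross

/-- `E` forms a spanning tree on the point set `P`: all edges are edges of `K(P)` and the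
corresponding graph on the points of `P` is connected and acyclic. -/
def IsSpanningTreeOn (P : Finset Pt) (E : Set (Sym2 Pt)) : Prop :=
  E ⊆ KEdges P ∧
    (SimpleGraph.fromRel (fun a b : {x // x ∈ P} => s((a : Pt), (b : Pt)) ∈ E)).IsTree

/-!
Number the points counterclockwise by `0, …, n - 1` and give the edge joining the points `a` and `b`
the slope `a + b` modulo `n`; in a regular `n`-gon, edges are parallel exactly when their slopes
agree. At most `|σ - τ| - 1` edges of slope `τ` cross a given edge of slope `σ`: turning the given
edge into a crossing one, counterclockwise if `σ < τ` and clockwise if `τ < σ`, moves its endpoints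
by positive amounts whose sum is `|σ - τ|`, and these amounts determine the crossing edge. The
classes are the blocks of `s` consecutive slopes. If `i` slopes of the block precede `σ` and `j`
follow it, then `i + j = s - 1`, and at most `C(i, 2) + C(j, 2) ≤ C(s - 1, 2)` edges of the class
cross the given one.
-/

section Orientation

/-- Twice the signed area of the triangle `p q r`, positive when the turn from `p` through `q` to
`r` is counterclockwise. -/
def orient (p q r : Pt) : ℝ :=
  (q.1 - p.1) * (r.2 - p.2) - (q.2 - p.2) * (r.1 - p.1)

variable {o p q r t : Pt}

lemma orient_self_right (p q : Pt) : orient p q q = 0 := by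
  simp only [orient]; ring

lemma orient_rotate (p q r : Pt) : orient p q r = orient r p q := by
  simp only [orient]; ring

lemma orient_swap (p q r : Pt) : orient p q r = -orient p r q := by
  simp only [orient]; ring

lemma orient_add_orient (o p q r : Pt) :
    orient o p q + orient o q r = orient o p r + orient p q r := by
  simp only [orient]; ring

lemma orient_convexCombination (p q r t : Pt) {a b : ℝ} (hab : a + b = 1) :
    orient p q (a • r + b • t) = a * orient p q r + b * orient p q t := by
  obtain rfl : a = 1 - b := by linarith
  simp only [orient, Prod.fst_add, Prod.snd_add, Prod.smul_fst, Prod.smul_snd, smul_eq_mul]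
  ring

lemma collinear_of_orient_eq_zero (h : orient p q r = 0) :
    Collinear ℝ ({p, q, r} : Set Pt) := by
  rcases eq_or_ne p q with rfl | hpq
  · simpa using collinear_pair ℝ p r
  have hD : (q.1 - p.1) ^ 2 + (q.2 - p.2) ^ 2 ≠ 0 := fun hD =>
    hpq (Prod.ext (by nlinarith) (by nlinarith))
  rw [collinear_iff_of_mem (p₀ := p) (by simp)]
  refine ⟨q - p, ?_⟩
  rintro x (rfl | rfl | rfl)
  · exact ⟨0, by simp⟩
  · exact ⟨1, by simp⟩
  · -- The coefficient is that of the orthogonal projection onto the line `p q`.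
    refine ⟨((q.1 - p.1) * (x.1 - p.1) + (q.2 - p.2) * (x.2 - p.2)) /
      ((q.1 - p.1) ^ 2 + (q.2 - p.2) ^ 2), ?_⟩
    simp only [orient] at h
    ext <;> simp only [vadd_eq_add, Prod.fst_add, Prod.snd_add, Prod.smul_fst, Prod.smul_snd,
      Prod.fst_sub, Prod.snd_sub, smul_eq_mul] <;> field_simp
    · linear_combination (-(q.2 - p.2)) * h
    · linear_combination (q.1 - p.1) * h

lemma disjoint_openSegment_of_orient_mul_pos (h : 0 < orient p q r * orient p q t) :
    Disjoint (openSegment ℝ p q) (openSegment ℝ r t) := by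
  rw [Set.disjoint_left]
  rintro z ⟨a, b, -, -, hab, rfl⟩ ⟨c, d, hc, hd, hcd, hz⟩
  have on_line : orient p q (a • p + b • q) = 0 := by
    rw [orient_convexCombination p q p q hab, orient_rotate p q p, orient_rotate p p q,
      orient_self_right, orient_self_right, mul_zero, mul_zero, add_zero]
  rw [← hz, orient_convexCombination p q r t hcd] at on_line
  rcases pos_and_pos_or_neg_and_neg_of_mul_pos h with ⟨hr, ht⟩ | ⟨hr, ht⟩
  · linarith [mul_pos hc hr, mul_pos hd ht]
  · linarith [mul_neg_of_pos_of_neg hc hr, mul_neg_of_pos_of_neg hd ht]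

lemma mem_convexHull_of_orient_nonpos (hop : 0 < orient o p q) (hoq : 0 < orient o q r)
    (hpqr : orient p q r ≤ 0) : q ∈ convexHull ℝ ({o, p, r} : Set Pt) := by
  have hD : 0 < orient o p r := by linarith [orient_add_orient o p q r]
  refine mem_convexHull_of_exists_fintype
    ![-orient p q r / orient o p r, orient o q r / orient o p r, orient o p q / orient o p r]
    ![o, p, r] ?_ ?_ ?_ ?_
  · simp only [Fin.forall_fin_succ, Matrix.cons_val_zero, Matrix.cons_val_succ, IsEmpty.forall_iff,
      and_true]
    exact ⟨div_nonneg (neg_nonneg.2 hpqr) hD.le, div_nonneg hoq.le hD.le, div_nonneg hop.le hD.le⟩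
  · simp only [Fin.sum_univ_three, Matrix.cons_val]
    field_simp
    linear_combination orient_add_orient o p q r
  · simp [Fin.forall_fin_succ]
  · ext <;> simp only [Fin.sum_univ_three, Matrix.cons_val, Prod.fst_add, Prod.snd_add,
      Prod.smul_fst, Prod.smul_snd, smul_eq_mul] <;> field_simp <;> simp only [orient] <;> ring

lemma fst_lt_of_orient_pos (hp : toLex o ≤ toLex p) (hq : toLex o ≤ toLex q)
    (h : 0 < orient o p q) : o.1 < p.1 := by
  rw [Prod.Lex.toLex_le_toLex] at hp hq
  refine hp.resolve_right fun ⟨hfst, hsnd⟩ => h.not_ge ?_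
  have hq : o.1 ≤ q.1 := hq.elim le_of_lt fun hq => hq.1.le
  have := mul_nonneg (sub_nonneg.2 hsnd) (sub_nonneg.2 hq)
  simpa [orient, ← hfst] using this

lemma orient_pos_trans (hp : toLex o ≤ toLex p) (hq : toLex o ≤ toLex q)
    (hr : toLex o ≤ toLex r) (hpq : 0 < orient o p q) (hqr : 0 < orient o q r) :
    0 < orient o p r := by
  have hp₁ := sub_pos.2 (fst_lt_of_orient_pos hp hq hpq)
  have hq₁ := sub_pos.2 (fst_lt_of_orient_pos hq hr hqr)
  have hr₁ : 0 ≤ r.1 - o.1 := sub_nonneg.2 (Prod.Lex.monotone_fst _ _ hr)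
  have cross_relation : orient o p r * (q.1 - o.1) =
      orient o p q * (r.1 - o.1) + orient o q r * (p.1 - o.1) := by
    simp only [orient]; ring
  refine pos_of_mul_pos_left (cross_relation ▸ ?_) hq₁.le
  positivity

end Orientation

section CounterclockwiseEnumeration

/-- A family of points indexed by a linear order, all of whose increasing triples turn
counterclockwise: the vertices of a convex polygon, in the cyclic order cut at some vertex. -/
def IsCounterclockwise {ι : Type*} [LinearOrder ι] (v : ι → Pt) : Prop :=
  ∀ ⦃i j k⦄, i < j → j < k → 0 < orient (v i) (v j) (v k)

/-- The order of points by the angle at which they are seen from `o`, with `o` itself first. It is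
a linear order on point sets in general position whose lexicographic minimum is `o`. -/
def AngularLT (o p q : Pt) : Prop :=
  q ≠ o ∧ (p = o ∨ 0 < orient o p q)

lemma GenPos.isStrictTotalOrder_angularLT {P : Finset Pt} (hP : GenPos P) {o : Pt} (ho : o ∈ P)
    (hmin : ∀ p ∈ P, toLex o ≤ toLex p) :
    IsStrictTotalOrder P (fun p q => AngularLT o p q) where
  irrefl := by
    rintro p ⟨hpo, hpo' | h⟩
    · exact hpo hpo'
    · exact h.ne' (orient_self_right o p)
  trans := by
    rintro p q r ⟨hqo, hpq⟩ ⟨hro, hqr⟩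
    exact ⟨hro, hpq.imp_right fun hpq => orient_pos_trans (hmin p p.2) (hmin q q.2) (hmin r r.2)
      hpq (hqr.resolve_left hqo)⟩
  trichotomous := by
    rintro ⟨p, hp⟩ ⟨q, hq⟩ hpq hqp
    by_contra hne
    rw [Subtype.mk.injEq] at hne
    have hqo : q ≠ o := fun hqo => hqp ⟨hqo ▸ hne, Or.inl hqo⟩
    have hpo : p ≠ o := fun hpo => hpq ⟨hqo, Or.inl hpo⟩
    have not_pos : ¬ 0 < orient o p q := fun h => hpq ⟨hqo, Or.inr h⟩
    have not_neg : ¬ 0 < orient o q p := fun h => hqp ⟨hpo, Or.inr h⟩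
    rw [orient_swap] at not_neg
    exact hP o ho p hp q hq hpo.symm hqo.symm hne (collinear_of_orient_eq_zero (by linarith))

lemma ConvexPos.orient_pos_of_angularLT {P : Finset Pt} (hP : ConvexPos P) {o p q r : Pt}
    (ho : o ∈ P) (hp : p ∈ P) (hq : q ∈ P) (hr : r ∈ P) (hpq : AngularLT o p q)
    (hqr : AngularLT o q r) : 0 < orient p q r := by
  have hoqr : 0 < orient o q r := hqr.2.resolve_left hpq.1
  obtain ⟨hqo, rfl | hopq⟩ := hpq
  · exact hoqr
  by_contra! hpqr
  have hqp : q ≠ p := by rintro rfl; exact hopq.ne' (orient_self_right o q)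
  have hqr' : q ≠ r := by rintro rfl; exact hoqr.ne' (orient_self_right o q)
  refine hP.2 q hq (convexHull_mono ?_ (mem_convexHull_of_orient_nonpos hopq hoqr hpqr))
  rintro x (rfl | rfl | rfl) <;> simp [*, Ne.symm]

lemma exists_equiv_fin_of_isStrictTotalOrder {α : Type*} [Fintype α] (r : α → α → Prop)
    [IsStrictTotalOrder α r] {n : ℕ} (hn : Fintype.card α = n) :
    ∃ e : Fin n ≃ α, ∀ ⦃i j⦄, i < j → r (e i) (e j) := by
  classical
  let : LinearOrder α := linearOrderOfSTO r
  exact ⟨(monoEquivOfFin α hn).toEquiv, fun _ _ hij => (monoEquivOfFin α hn).strictMono hij⟩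

lemma ConvexPos.exists_isCounterclockwise {P : Finset Pt} (hP : ConvexPos P) :
    ∃ v : Fin P.card → Pt,
      Function.Injective v ∧ Set.range v = P ∧ IsCounterclockwise v := by
  rcases P.eq_empty_or_nonempty with rfl | hne
  · exact ⟨fun i => i.elim0, fun i => i.elim0, by simp, fun i => i.elim0⟩
  obtain ⟨o, ho, hmin⟩ := P.exists_min_image toLex hne
  have := hP.1.isStrictTotalOrder_angularLT ho hmin
  obtain ⟨e, he⟩ := exists_equiv_fin_of_isStrictTotalOrder
    (fun p q : P => AngularLT o p q) (Fintype.card_coe P)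
  refine ⟨fun i => e i, Subtype.val_injective.comp e.injective, ?_, fun i j k hij hjk => ?_⟩
  · rw [Set.range_comp' Subtype.val e, e.surjective.range_eq]
    simp
  · exact hP.orient_pos_of_angularLT ho (e i).2 (e j).2 (e k).2 (he hij) (he hjk)

end CounterclockwiseEnumeration

section Crossing

lemma Cross.not_disjoint_openSegment {p q r t : Pt} (h : Cross s(p, q) s(r, t)) :
    ¬ Disjoint (openSegment ℝ p q) (openSegment ℝ r t) := by
  obtain ⟨-, p', q', r', t', hpq, hrt, hmeet⟩ := h
  have openSegment_eq {a b c d : Pt} (h : s(a, b) = s(c, d)) :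
      openSegment ℝ a b = openSegment ℝ c d := by
    rcases Sym2.eq_iff.1 h with ⟨rfl, rfl⟩ | ⟨rfl, rfl⟩
    · rfl
    · exact openSegment_symm ℝ a b
  rwa [openSegment_eq hpq, openSegment_eq hrt, Set.not_disjoint_iff_nonempty_inter]

/-- The chords joining an index strictly between `a` and `b` to one outside `[a, b]`: those which
cross the chord `s(a, b)` of a convex polygon. -/
def interlacing {ι : Type*} [LinearOrder ι] (a b : ι) : Set (Sym2 ι) :=
  {f | ∃ x ∈ Set.Ioo a b, ∃ y ∉ Set.Icc a b, f = s(x, y)}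

variable {ι : Type*} [LinearOrder ι] {v : ι → Pt} {a b : ι}

lemma IsCounterclockwise.orient_neg_of_mem_Ioo (hv : IsCounterclockwise v) {x : ι}
    (hx : x ∈ Set.Ioo a b) : orient (v a) (v b) (v x) < 0 := by
  rw [orient_swap]
  exact neg_neg_of_pos (hv hx.1 hx.2)

lemma IsCounterclockwise.orient_pos_of_notMem_Icc (hv : IsCounterclockwise v) (hab : a < b) {x : ι}
    (hx : x ∉ Set.Icc a b) : 0 < orient (v a) (v b) (v x) := by
  rcases lt_or_ge x a with hxa | hax
  · rw [orient_rotate]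
    exact hv hxa hab
  · exact hv hab (not_le.1 fun hxb => hx ⟨hax, hxb⟩)

lemma IsCounterclockwise.mem_interlacing_of_cross (hv : IsCounterclockwise v) (hab : a < b)
    {f : Sym2 ι} (hf : Cross s(v a, v b) (f.map v)) : f ∈ interlacing a b := by
  induction f with | _ x y =>
  have not_same_side : ¬ 0 < orient (v a) (v b) (v x) * orient (v a) (v b) (v y) := fun h =>
    hf.not_disjoint_openSegment (disjoint_openSegment_of_orient_mul_pos h)
  have ne_endpoint {z : ι} (hz : z ∈ s(x, y)) : z ≠ a ∧ z ≠ b := by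
    constructor <;> rintro rfl
    · exact hf.1 _ (Sym2.mem_mk_left _ _) (Sym2.mem_map.2 ⟨_, hz, rfl⟩)
    · exact hf.1 _ (Sym2.mem_mk_right _ _) (Sym2.mem_map.2 ⟨_, hz, rfl⟩)
  have inside_or_outside {z : ι} (hz : z ∈ s(x, y)) : z ∈ Set.Ioo a b ∨ z ∉ Set.Icc a b := by
    have := ne_endpoint hz
    grind
  rcases inside_or_outside (Sym2.mem_mk_left x y) with hx | hx <;>
    rcases inside_or_outside (Sym2.mem_mk_right x y) with hy | hy
  · exact absurd (mul_pos_of_neg_of_neg (hv.orient_neg_of_mem_Ioo hx)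
      (hv.orient_neg_of_mem_Ioo hy)) not_same_side
  · exact ⟨x, hx, y, hy, rfl⟩
  · exact ⟨y, hy, x, hx, Sym2.eq_swap⟩
  · exact absurd (mul_pos (hv.orient_pos_of_notMem_Icc hab hx)
      (hv.orient_pos_of_notMem_Icc hab hy)) not_same_side

end Crossing

section ChordSlope

variable {n : ℕ}

/-- The sum modulo `n` of the endpoints of a chord: two chords of a regular `n`-gon are parallel
exactly when their values agree. -/
def chordSlope (e : Sym2 (Fin n)) : Fin n :=
  e.lift ⟨(· + ·), add_comm⟩

lemma chordSlope_mk (a b : Fin n) : chordSlope s(a, b) = a + b := rfl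

/-- Going from `s(a, b)` to `s(x, y)` both endpoints move in the same direction, so the one from
`a` to `x`, or from `b` to `x`, moves by less than the slope changes. -/
lemma add_chordSlope_lt_of_interlacing {a b x y : Fin n} (hx : x ∈ Set.Ioo a b)
    (hy : y ∉ Set.Icc a b) :
    (x : ℕ) + (a + b : Fin n) < a + (x + y : Fin n) ∨
      (b : ℕ) + (x + y : Fin n) < x + (a + b : Fin n) := by
  rw [Set.mem_Ioo, Fin.lt_def, Fin.lt_def] at hx
  rw [Set.mem_Icc, Fin.le_def, Fin.le_def] at hy
  simp only [Fin.val_add_eq_ite]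
  split_ifs <;> omega

/-- One of the two truncated differences vanishes, so that the bound is `|σ - τ| - 1` for `τ ≠ σ`,
where `σ` is the slope of `s(a, b)`. -/
lemma ncard_interlacing_chordSlope_eq_le (a b : Fin n) (τ : ℕ) :
    {f ∈ interlacing a b | (chordSlope f : ℕ) = τ}.ncard ≤
      (τ - chordSlope s(a, b) - 1) + (chordSlope s(a, b) - τ - 1) := by
  have : NeZero n := ⟨fun h => (h ▸ a).elim0⟩
  set σ : ℕ := (chordSlope s(a, b) : Fin n).val with hσ
  let inner : Finset ℕ := Finset.Ioo a (a + (τ - σ)) ∪ Finset.Ioo (b - (σ - τ)) b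
  let chordThrough (i : ℕ) : Sym2 (Fin n) := s(Fin.ofNat n i, Fin.ofNat n τ - Fin.ofNat n i)
  have determined_by_inner : {f ∈ interlacing a b | (chordSlope f : ℕ) = τ} ⊆
      (inner.image chordThrough : Finset (Sym2 (Fin n))) := by
    rintro _ ⟨⟨x, hx, y, hy, rfl⟩, hτ⟩
    rw [chordSlope_mk] at hτ hσ
    rw [Finset.mem_coe, Finset.mem_image]
    refine ⟨x, ?_, by simp [chordThrough, ← hτ]⟩
    have := add_chordSlope_lt_of_interlacing hx hy
    rw [Set.mem_Ioo, Fin.lt_def, Fin.lt_def] at hx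
    simp only [inner, Finset.mem_union, Finset.mem_Ioo]
    omega
  calc {f ∈ interlacing a b | (chordSlope f : ℕ) = τ}.ncard
      ≤ (inner.image chordThrough).card :=
        (Set.ncard_le_ncard determined_by_inner).trans_eq (Set.ncard_coe_finset _)
    _ ≤ inner.card := Finset.card_image_le
    _ ≤ (Finset.Ioo (a : ℕ) (a + (τ - σ))).card + (Finset.Ioo (b - (σ - τ)) (b : ℕ)).card :=
        Finset.card_union_le _ _
    _ ≤ (τ - σ - 1) + (σ - τ - 1) := by
        simp only [Nat.card_Ioo]
        omega

end ChordSlope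

section Counting

lemma choose_two_add_choose_two_le (i j : ℕ) : i.choose 2 + j.choose 2 ≤ (i + j).choose 2 := by
  induction j with
  | zero => simp
  | succ j ih =>
    rw [← add_assoc, Nat.choose_succ_succ' j 1, Nat.choose_succ_succ' (i + j) 1]
    simp only [Nat.choose_one_right, Nat.reduceAdd]
    omega

lemma sum_Ico_sub_add_sub_le {m s σ : ℕ} (hm : m ≤ σ) (hs : σ < m + s) :
    ∑ τ ∈ Finset.Ico m (m + s), ((τ - σ - 1) + (σ - τ - 1)) ≤ (s - 1).choose 2 := by
  obtain ⟨i, rfl⟩ := Nat.exists_eq_add_of_le hm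
  obtain ⟨j, rfl⟩ : ∃ j, s = i + (j + 1) := ⟨s - i - 1, by omega⟩
  calc ∑ τ ∈ Finset.Ico m (m + (i + (j + 1))), ((τ - (m + i) - 1) + (m + i - τ - 1))
      = ∑ k ∈ Finset.range i, (i - 1 - k) + ∑ k ∈ Finset.range (j + 1), (k - 1) := by
        rw [Finset.sum_Ico_eq_sum_range, Nat.add_sub_cancel_left, Finset.sum_range_add]
        congr 1 <;> refine Finset.sum_congr rfl fun k hk => ?_ <;>
          rw [Finset.mem_range] at hk <;> omega
    _ = ∑ k ∈ Finset.range i, k + ∑ k ∈ Finset.range j, k := by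
        rw [Finset.sum_range_reflect (fun k => k), Finset.sum_range_succ']
        rfl
    _ = i.choose 2 + j.choose 2 := by
        simp only [Finset.sum_range_id, Nat.choose_two_right]
    _ ≤ (i + (j + 1) - 1).choose 2 := choose_two_add_choose_two_le i j

lemma ncard_interlacing_chordSlope_div_eq_le {n : ℕ} (a b : Fin n) {s : ℕ} (hs : 0 < s) :
    {f ∈ interlacing a b | (chordSlope f : ℕ) / s = chordSlope s(a, b) / s}.ncard ≤
      (s - 1).choose 2 := by
  set σ : ℕ := (chordSlope s(a, b) : Fin n).val
  have mem_block (τ : ℕ) : τ ∈ Finset.Ico (σ / s * s) (σ / s * s + s) ↔ τ / s = σ / s := by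
    rw [Finset.mem_Ico, Nat.div_eq_iff hs]
    omega
  calc {f ∈ interlacing a b | (chordSlope f : ℕ) / s = σ / s}.ncard
      ≤ (⋃ τ ∈ Finset.Ico (σ / s * s) (σ / s * s + s),
          {f ∈ interlacing a b | (chordSlope f : ℕ) = τ}).ncard := by
        refine Set.ncard_le_ncard fun f hf => ?_
        exact Set.mem_biUnion ((mem_block _).2 hf.2) ⟨hf.1, rfl⟩
    _ ≤ ∑ τ ∈ Finset.Ico (σ / s * s) (σ / s * s + s),
          {f ∈ interlacing a b | (chordSlope f : ℕ) = τ}.ncard := Finset.set_ncard_biUnion_le _ _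
    _ ≤ ∑ τ ∈ Finset.Ico (σ / s * s) (σ / s * s + s), ((τ - σ - 1) + (σ - τ - 1)) :=
        Finset.sum_le_sum fun τ _ => ncard_interlacing_chordSlope_eq_le a b τ
    _ ≤ (s - 1).choose 2 := by
        have hσ := Finset.mem_Ico.1 ((mem_block σ).2 rfl)
        exact sum_Ico_sub_add_sub_le hσ.1 hσ.2

end Counting

section SlopeClass

variable {n : ℕ}

/-- The edges on the points `v` whose slope lies in the `k`-th block of `s` consecutive values;
loops, which are elements of `Sym2` but not edges, are left out. -/
def slopeClass (v : Fin n → Pt) (s k : ℕ) : Set (Sym2 Pt) :=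
  Sym2.map v '' {e | ¬ e.IsDiag ∧ (chordSlope e : ℕ) / s = k}

variable {v : Fin n → Pt}

lemma kEdges_eq_image_map {P : Finset Pt} (hv : Function.Injective v) (hP : Set.range v = P) :
    KEdges P = Sym2.map v '' {e | ¬ e.IsDiag} := by
  have mem_P (p : Pt) : p ∈ P ↔ ∃ a, v a = p := by rw [← Finset.mem_coe, ← hP, Set.mem_range]
  ext e
  constructor
  · rintro ⟨p, hp, q, hq, hpq, rfl⟩
    obtain ⟨a, rfl⟩ := (mem_P p).1 hp
    obtain ⟨b, rfl⟩ := (mem_P q).1 hq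
    exact ⟨s(a, b), ne_of_apply_ne v hpq, rfl⟩
  · rintro ⟨e, he, rfl⟩
    induction e with | _ a b =>
    exact ⟨v a, (mem_P _).2 ⟨a, rfl⟩, v b, (mem_P _).2 ⟨b, rfl⟩, hv.ne he, rfl⟩

lemma disjoint_slopeClass (hv : Function.Injective v) (s : ℕ) {k l : ℕ} (hkl : k ≠ l) :
    Disjoint (slopeClass v s k) (slopeClass v s l) := by
  rw [slopeClass, slopeClass, Set.disjoint_image_iff (Sym2.map.injective hv), Set.disjoint_left]
  exact fun e hk hl => hkl (hk.2.symm.trans hl.2)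

lemma iUnion_slopeClass (v : Fin n → Pt) {s : ℕ} (hs : 0 < s) :
    ⋃ k : Fin ⌈(n : ℝ) / s⌉₊, slopeClass v s k = Sym2.map v '' {e | ¬ e.IsDiag} := by
  have block_lt (σ : Fin n) : (σ : ℕ) / s < ⌈(n : ℝ) / s⌉₊ := by
    rw [Nat.lt_ceil, lt_div_iff₀ (by exact_mod_cast hs)]
    exact_mod_cast (Nat.div_mul_le_self σ s).trans_lt σ.isLt
  simp only [slopeClass, ← Set.image_iUnion]
  congr 1
  ext e
  rw [Set.mem_iUnion]
  exact ⟨fun ⟨_, he⟩ => he.1, fun he => ⟨⟨_, block_lt (chordSlope e)⟩, he, rfl⟩⟩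

lemma IsCounterclockwise.kPlane_slopeClass (hv : IsCounterclockwise v) {s : ℕ} (hs : 0 < s)
    (k : ℕ) : KPlane ((s - 1).choose 2) (slopeClass v s k) := by
  rintro _ ⟨e, ⟨he, rfl⟩, rfl⟩
  obtain ⟨a, b, hab, rfl⟩ : ∃ a b, a < b ∧ e = s(a, b) := by
    induction e with | _ a b =>
    rcases lt_or_gt_of_ne (he : a ≠ b) with hab | hba
    · exact ⟨a, b, hab, rfl⟩
    · exact ⟨b, a, hba, Sym2.eq_swap⟩
  let C := {f ∈ interlacing a b | (chordSlope f : ℕ) / s = chordSlope s(a, b) / s}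
  have crossing_subset : {f | f ∈ slopeClass v s (chordSlope s(a, b) / s) ∧
      Cross (Sym2.map v s(a, b)) f} ⊆ Sym2.map v '' C := by
    rintro _ ⟨⟨f, ⟨-, hf⟩, rfl⟩, hcross⟩
    exact ⟨f, ⟨hv.mem_interlacing_of_cross hab hcross, hf⟩, rfl⟩
  calc _ ≤ (Sym2.map v '' C).ncard := Set.ncard_le_ncard crossing_subset
    _ ≤ C.ncard := Set.ncard_image_le
    _ ≤ (s - 1).choose 2 := ncard_interlacing_chordSlope_div_eq_le a b hs

end SlopeClass

theorem stmt_2_general (n : ℕ) (P : Finset Pt) (hP : ConvexPos P) (hcard : P.card = n)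
    (s : ℕ) (hs : 0 < s) :
    ∃ F : Fin (⌈(n : ℝ) / (s : ℝ)⌉₊) → Set (Sym2 Pt),
      (⋃ i, F i) = KEdges P ∧
      (Pairwise fun i j => Disjoint (F i) (F j)) ∧
      (∀ i, KPlane ((s - 1) * (s - 2) / 2) (F i)) := by
  subst hcard
  obtain ⟨v, hinj, hrange, hccw⟩ := hP.exists_isCounterclockwise
  refine ⟨fun i => slopeClass v s i, ?_, ?_, fun i => ?_⟩
  · rw [iUnion_slopeClass v hs, kEdges_eq_image_map hinj hrange]
  · exact fun i j hij => disjoint_slopeClass hinj s (Fin.val_injective.ne hij)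
  · rw [← Nat.sub_sub s 1 1, ← Nat.choose_two_right]
    exact hccw.kPlane_slopeClass hs i

/-- For `n` points in convex position and an integer `s > 2`, `K(P)` can be
partitioned into `⌈n/s⌉` classes each of which is `((s-1)(s-2)/2)`-plane. -/
theorem stmt_2 (n : ℕ) (P : Finset Pt) (hP : ConvexPos P) (hcard : P.card = n)
    (s : ℕ) (hs : 2 < s) :
    ∃ F : Fin (⌈(n : ℝ) / (s : ℝ)⌉₊) → Set (Sym2 Pt),
      (⋃ i, F i) = KEdges P ∧
      (Pairwise fun i j => Disjoint (F i) (F j)) ∧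
      (∀ i, KPlane ((s - 1) * (s - 2) / 2) (F i)) := by
  exact stmt_2_general n P hP hcard s (by omega)
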